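/- Let (r, s) be a Prodi–Serrin pair with 3 < r < ∞, i.e. 2 < s < ∞ and 3/r + 2/s = 1. There exists a constant C_r > 0 such that for every smooth compactly supported divergence-free vector field u ∈ C_c^∞(ℝ³; ℝ³), ‖(u·∇)u‖_{L²(ℝ³)} ≤ C_r · ‖u‖_{L^{r,∞}(ℝ³)} · ‖∇u‖_{L²(ℝ³)}^{2/s} · ‖Δu‖_{L²(ℝ³)}^{(s−2)/s}, where (u·∇)u is the vector field with i-th component Σ_{j=1}^3 u_j ∂u_i/∂x_j. -/

import Mathlib

open MeasureTheory Set ENNReal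

/-- The weak-`L^p` (Marcinkiewicz) quasinorm of a (possibly vector-valued) function:
`‖f‖_{p,∞} = sup {α · d_f(α)^(1/p) : α > 0}`, where
`d_f(α) = μ {x | ‖f x‖ > α}` is the distribution function of `f`. -/
noncomputable def weakLpNorm {X Y : Type*} [MeasurableSpace X] [Norm Y]
    (μ : Measure X) (p : ℝ) (f : X → Y) : ℝ≥0∞ :=
  ⨆ (α : ℝ) (_ : 0 < α), ENNReal.ofReal α * (μ {x | α < ‖f x‖}) ^ (1 / p)

/-!
In dimension `n`, split the transporting field `u` at a level `l`. Where `|u| ≤ l`, the product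
`|u| |∇v|` is controlled by `l ‖∇v‖₂`; where `|u| > l`, the weak bound makes `u` an `L^n`
function, and Hölder pairs it with `∇v ∈ L^p`, `1/n + 1/p = 1/2`. Choosing `l` optimally
interpolates the two bounds with weight `n/r` on the second. The exponent `p` is the Sobolev
exponent of `L²`, so `‖∇v‖_p ≲ ‖D²v‖₂`, and two integrations by parts give `‖D²v‖₂ = ‖Δv‖₂`.
-/

section WeakLp

open scoped NNReal

variable {X Y Z : Type*} [MeasurableSpace X] {μ : Measure X}

lemma measure_lt_norm_le_weakLpNorm [Norm Y] {p : ℝ} (hp : 0 < p) (f : X → Y) {α : ℝ}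
    (hα : 0 < α) :
    μ {x | α < ‖f x‖} ≤ ENNReal.ofReal (α ^ (-p)) * weakLpNorm μ p f ^ p := by
  have hle : ENNReal.ofReal α * (μ {x | α < ‖f x‖}) ^ (1 / p) ≤ weakLpNorm μ p f :=
    le_iSup₂ (f := fun (α : ℝ) (_ : 0 < α) => ENNReal.ofReal α * (μ {x | α < ‖f x‖}) ^ (1 / p))
      α hα
  have hpow := ENNReal.rpow_le_rpow hle hp.le
  rw [ENNReal.mul_rpow_of_nonneg _ _ hp.le, ← ENNReal.rpow_mul, one_div_mul_cancel hp.ne',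
    ENNReal.rpow_one, ENNReal.ofReal_rpow_of_pos hα] at hpow
  calc μ {x | α < ‖f x‖}
      = ENNReal.ofReal (α ^ (-p)) * (ENNReal.ofReal (α ^ p) * μ {x | α < ‖f x‖}) := by
        rw [← mul_assoc, ← ENNReal.ofReal_mul (by positivity), ← Real.rpow_add hα]
        simp
    _ ≤ _ := by gcongr

variable [NormedAddCommGroup Y] [NormedAddCommGroup Z]

lemma ae_eq_zero_of_weakLpNorm_eq_zero {p : ℝ} (hp : 0 < p) {f : X → Y}
    (hf : weakLpNorm μ p f = 0) : f =ᵐ[μ] 0 := by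
  have hle (n : ℕ) : ∀ᵐ x ∂μ, ‖f x‖ ≤ 1 / ((n : ℝ) + 1) := by
    have hnull := measure_lt_norm_le_weakLpNorm (μ := μ) hp f (α := 1 / ((n : ℝ) + 1))
      (by positivity)
    rw [hf, ENNReal.zero_rpow_of_pos hp, mul_zero, nonpos_iff_eq_zero] at hnull
    simpa [ae_iff] using hnull
  filter_upwards [ae_all_iff.2 hle] with x hx
  exact norm_le_zero_iff.1 (ge_of_tendsto' tendsto_one_div_add_atTop_nhds_zero_nat hx)

lemma lintegral_Ioi_max_rpow_neg_mul_rpow {p q l : ℝ} (hq : 0 < q) (hqp : q < p) (hl : 0 < l) :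
    ∫⁻ t in Ioi 0, ENNReal.ofReal (max t l ^ (-p) * t ^ (q - 1)) =
      ENNReal.ofReal (p / (q * (p - q)) * l ^ (q - p)) := by
  have hpq : 0 < p - q := by linarith
  have near : ∫⁻ t in Ioc 0 l, ENNReal.ofReal (max t l ^ (-p) * t ^ (q - 1)) =
      ENNReal.ofReal (l ^ (-p) * (l ^ q / q)) := by
    have hint : IntegrableOn (fun t : ℝ => t ^ (q - 1)) (Ioc 0 l) :=
      (intervalIntegrable_iff_integrableOn_Ioc_of_le hl.le).1
        (intervalIntegral.intervalIntegrable_rpow' (by linarith))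
    rw [setLIntegral_congr_fun measurableSet_Ioc
        (g := fun t => ENNReal.ofReal (l ^ (-p) * t ^ (q - 1)))
        fun t ht => by simp only [max_eq_right ht.2],
      ← ofReal_integral_eq_lintegral_ofReal (hint.const_mul _)
        (ae_restrict_of_forall_mem measurableSet_Ioc fun t ht => by
          have := ht.1
          positivity),
      integral_const_mul, ← intervalIntegral.integral_of_le hl.le,
      integral_rpow (.inl (by linarith))]
    simp [Real.zero_rpow hq.ne']
  have far : ∫⁻ t in Ioi l, ENNReal.ofReal (max t l ^ (-p) * t ^ (q - 1)) =
      ENNReal.ofReal (l ^ (q - p) / (p - q)) := by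
    rw [setLIntegral_congr_fun measurableSet_Ioi
        (g := fun t => ENNReal.ofReal (t ^ (q - p - 1))) fun t (ht : l < t) => by
          rw [max_eq_left ht.le, ← Real.rpow_add (hl.trans ht)]
          ring_nf,
      ← ofReal_integral_eq_lintegral_ofReal (integrableOn_Ioi_rpow_of_lt (by linarith) hl)
        (ae_restrict_of_forall_mem measurableSet_Ioi fun t (ht : l < t) => by
          have := hl.trans ht
          positivity),
      integral_Ioi_rpow_of_lt (by linarith) hl, sub_add_cancel, ← neg_sub p q, neg_div_neg_eq]
  rw [← Ioc_union_Ioi_eq_Ioi hl.le, lintegral_union measurableSet_Ioi Ioc_disjoint_Ioi_same,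
    near, far, ← ENNReal.ofReal_add (by positivity) (by positivity), sub_eq_add_neg q,
    Real.rpow_add hl]
  congr 1
  field_simp
  ring

lemma setLIntegral_enorm_rpow_le_weakLpNorm {p q l : ℝ} (hq : 0 < q) (hqp : q < p) (hl : 0 < l)
    {f : X → Y} (hf : AEStronglyMeasurable f μ) :
    ∫⁻ x in {x | l < ‖f x‖}, ‖f x‖ₑ ^ q ∂μ ≤
      ENNReal.ofReal (p / (p - q) * l ^ (q - p)) * weakLpNorm μ p f ^ p := by
  set S := {x | l < ‖f x‖}
  have hS : NullMeasurableSet S μ := nullMeasurableSet_lt aemeasurable_const hf.norm.aemeasurable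
  have tail (t : ℝ) :
      μ.restrict S {x | t < ‖f x‖} ≤
        ENNReal.ofReal (max t l ^ (-p)) * weakLpNorm μ p f ^ p := by
    have hinter : {x | t < ‖f x‖} ∩ S = {x | max t l < ‖f x‖} := by ext; simp [S]
    rw [Measure.restrict_apply₀' hS, hinter]
    exact measure_lt_norm_le_weakLpNorm (hq.trans hqp) f (lt_max_of_lt_right hl)
  have hpq : 0 < p - q := by linarith
  calc ∫⁻ x in S, ‖f x‖ₑ ^ q ∂μ = ∫⁻ x in S, ENNReal.ofReal (‖f x‖ ^ q) ∂μ := by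
        simp_rw [← ofReal_norm, ENNReal.ofReal_rpow_of_nonneg (norm_nonneg _) hq.le]
    _ = ENNReal.ofReal q * ∫⁻ t in Ioi 0,
          μ.restrict S {x | t < ‖f x‖} * ENNReal.ofReal (t ^ (q - 1)) :=
        lintegral_rpow_eq_lintegral_meas_lt_mul _ (.of_forall fun x => norm_nonneg (f x))
          hf.norm.aemeasurable.restrict hq
    _ ≤ ENNReal.ofReal q * ∫⁻ t in Ioi 0,
          ENNReal.ofReal (max t l ^ (-p) * t ^ (q - 1)) * weakLpNorm μ p f ^ p := by
        refine mul_le_mul_right (setLIntegral_mono' measurableSet_Ioi fun t (ht : 0 < t) => ?_) _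
        rw [ENNReal.ofReal_mul (by positivity), mul_right_comm]
        gcongr
        exact tail t
    _ = ENNReal.ofReal (p / (p - q) * l ^ (q - p)) * weakLpNorm μ p f ^ p := by
        rw [lintegral_mul_const _ (by fun_prop), lintegral_Ioi_max_rpow_neg_mul_rpow hq hqp hl,
          ← mul_assoc, ← ENNReal.ofReal_mul hq.le]
        congr 2
        field_simp

lemma eLpNorm_indicator_lt_norm_le_weakLpNorm {p l : ℝ} {q : ℝ≥0} (hq : 0 < q) (hqp : q < p)
    (hl : 0 < l) {f : X → Y} (hf : AEStronglyMeasurable f μ) :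
    eLpNorm ({x | l < ‖f x‖}.indicator f) q μ ≤
      ENNReal.ofReal ((p / (p - q)) ^ (1 / (q : ℝ)) * l ^ (1 - p / q)) *
        weakLpNorm μ p f ^ (p / q) := by
  have hq' : (0 : ℝ) < q := by exact_mod_cast hq
  have : 0 < p - q := sub_pos.2 hqp
  have hp : 0 < p := hq'.trans hqp
  have hpow : (fun x => ‖{x | l < ‖f x‖}.indicator f x‖ₑ ^ (q : ℝ)) =
      {x | l < ‖f x‖}.indicator fun x => ‖f x‖ₑ ^ (q : ℝ) := by
    ext x
    by_cases hx : l < ‖f x‖ <;> simp [hx, hq']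
  rw [eLpNorm_nnreal_eq_lintegral hq.ne', hpow,
    lintegral_indicator₀ (nullMeasurableSet_lt aemeasurable_const hf.norm.aemeasurable)]
  calc (∫⁻ x in {x | l < ‖f x‖}, ‖f x‖ₑ ^ (q : ℝ) ∂μ) ^ (1 / (q : ℝ))
      ≤ (ENNReal.ofReal (p / (p - q) * l ^ (q - p)) * weakLpNorm μ p f ^ p) ^ (1 / (q : ℝ)) := by
        gcongr
        exact setLIntegral_enorm_rpow_le_weakLpNorm hq' hqp hl hf
    _ = _ := by
        rw [ENNReal.mul_rpow_of_nonneg _ _ (by positivity), ← ENNReal.rpow_mul, mul_one_div,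
          ENNReal.ofReal_rpow_of_nonneg (by positivity) (by positivity),
          Real.mul_rpow (by positivity) (by positivity), ← Real.rpow_mul hl.le, mul_one_div,
          sub_div, div_self hq'.ne']

lemma le_mul_rpow_of_forall_le_add {x A B W : ℝ≥0∞} {c θ : ℝ} (hc : 0 ≤ c) (hθ : θ ≠ 0)
    (hA₀ : A ≠ 0) (hA : A ≠ ∞) (hB₀ : B ≠ 0) (hB : B ≠ ∞) (hW₀ : W ≠ 0) (hW : W ≠ ∞)
    (h : ∀ l : ℝ, 0 < l →
      x ≤ ENNReal.ofReal l * A + ENNReal.ofReal (c * l ^ (1 - θ⁻¹)) * W ^ θ⁻¹ * B) :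
    x ≤ ENNReal.ofReal (1 + c) * W * A ^ (1 - θ) * B ^ θ := by
  have ha := ENNReal.toReal_pos hA₀ hA
  have hb := ENNReal.toReal_pos hB₀ hB
  have hw := ENNReal.toReal_pos hW₀ hW
  rw [← ENNReal.ofReal_toReal hA, ← ENNReal.ofReal_toReal hB, ← ENNReal.ofReal_toReal hW] at h ⊢
  generalize A.toReal = a at *
  generalize B.toReal = b at *
  generalize W.toReal = w at *
  -- The level at which the two terms scale alike.
  refine (h (w * (b / a) ^ θ) (by positivity)).trans_eq ?_
  have low : w * (b / a) ^ θ * a = w * a ^ (1 - θ) * b ^ θ := by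
    rw [Real.div_rpow hb.le ha.le, Real.rpow_sub ha, Real.rpow_one]
    ring
  have high : c * (w * (b / a) ^ θ) ^ (1 - θ⁻¹) * w ^ θ⁻¹ * b =
      c * (w * a ^ (1 - θ) * b ^ θ) := by
    rw [Real.mul_rpow hw.le (by positivity), ← Real.rpow_mul (by positivity), mul_sub, mul_one,
      mul_inv_cancel₀ hθ, Real.rpow_sub hw, Real.rpow_sub (by positivity), Real.rpow_one,
      Real.rpow_one, Real.div_rpow hb.le ha.le, Real.rpow_sub ha, Real.rpow_one]
    field_simp
  simp_rw [ENNReal.ofReal_rpow_of_pos ha, ENNReal.ofReal_rpow_of_pos hb,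
    ENNReal.ofReal_rpow_of_pos hw]
  rw [← ENNReal.ofReal_mul (by positivity), ← ENNReal.ofReal_mul (by positivity),
    ← ENNReal.ofReal_mul (by positivity), ← ENNReal.ofReal_add (by positivity) (by positivity),
    ← ENNReal.ofReal_mul (by positivity), ← ENNReal.ofReal_mul (by positivity),
    ← ENNReal.ofReal_mul (by positivity), low, high]
  congr 1
  ring

lemma eLpNorm_norm_mul_norm_le_add_weakLpNorm {a b : ℝ≥0∞} {p l : ℝ} {q : ℝ≥0}
    [HolderTriple q b a] (ha : 1 ≤ a) (hqp : q < p) (hl : 0 < l) {f : X → Y}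
    {g : X → Z} (hf : AEStronglyMeasurable f μ) (hg : AEStronglyMeasurable g μ) :
    eLpNorm (fun x => ‖f x‖ * ‖g x‖) a μ ≤
      ENNReal.ofReal l * eLpNorm g a μ +
        ENNReal.ofReal ((p / (p - q)) ^ (1 / (q : ℝ)) * l ^ (1 - p / q)) *
          weakLpNorm μ p f ^ (p / q) * eLpNorm g b μ := by
  have hq : 0 < q := by exact_mod_cast (zero_lt_one.trans_le ha).trans_le (HolderTriple.le q b a)
  set S := {x | l < ‖f x‖}
  have hS : NullMeasurableSet S μ := nullMeasurableSet_lt aemeasurable_const hf.norm.aemeasurable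
  have hsplit : (fun x => ‖f x‖ * ‖g x‖) =
      (fun x => ‖Sᶜ.indicator f x‖ * ‖g x‖) + fun x => ‖S.indicator f x‖ * ‖g x‖ := by
    ext x
    by_cases hx : x ∈ S <;> simp [hx]
  have low : eLpNorm (fun x => ‖Sᶜ.indicator f x‖ * ‖g x‖) a μ ≤
      ENNReal.ofReal l * eLpNorm g a μ := by
    refine eLpNorm_le_mul_eLpNorm_of_ae_le_mul (.of_forall fun x => ?_) a
    by_cases hx : x ∈ S
    · simpa [hx] using by positivity
    · have hfx : ‖f x‖ ≤ l := not_lt.1 hx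
      simpa [hx] using by gcongr
  have high : eLpNorm (fun x => ‖S.indicator f x‖ * ‖g x‖) a μ ≤
      eLpNorm (S.indicator f) q μ * eLpNorm g b μ := by
    simpa using eLpNorm_le_eLpNorm_mul_eLpNorm_of_nnnorm (hf.indicator₀ hS) hg
      (fun y z => ‖y‖ * ‖z‖) 1 (.of_forall fun x => by simp)
  rw [hsplit]
  refine (eLpNorm_add_le ((hf.indicator₀ hS.compl).norm.mul hg.norm)
    ((hf.indicator₀ hS).norm.mul hg.norm) ha).trans (add_le_add low (high.trans ?_))
  gcongr
  exact eLpNorm_indicator_lt_norm_le_weakLpNorm hq hqp hl hf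

theorem eLpNorm_norm_mul_norm_le_weakLpNorm {a b : ℝ≥0∞} {p : ℝ} {q : ℝ≥0} [HolderTriple q b a]
    (ha : 1 ≤ a) (hqp : q < p) {f : X → Y} {g : X → Z}
    (hf : AEStronglyMeasurable f μ) (hg : AEStronglyMeasurable g μ) :
    eLpNorm (fun x => ‖f x‖ * ‖g x‖) a μ ≤
      ENNReal.ofReal (1 + (p / (p - q)) ^ (1 / (q : ℝ))) * weakLpNorm μ p f *
        eLpNorm g a μ ^ (1 - q / p) * eLpNorm g b μ ^ (q / p) := by
  have hq : 0 < q := by exact_mod_cast (zero_lt_one.trans_le ha).trans_le (HolderTriple.le q b a)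
  have hq' : (0 : ℝ) < q := by exact_mod_cast hq
  have hp : 0 < p := hq'.trans hqp
  have : 0 < p - q := sub_pos.2 hqp
  have hθ : 0 < q / p := by positivity
  have hθ' : 0 < 1 - q / p := by rwa [sub_pos, div_lt_one hp]
  have ha₀ : 0 < a := zero_lt_one.trans_le ha
  have hb₀ : 0 < b := ha₀.trans_le (HolderTriple.le b q a)
  by_cases hfg : f =ᵐ[μ] 0 ∨ g =ᵐ[μ] 0
  · have hzero : (fun x => ‖f x‖ * ‖g x‖) =ᵐ[μ] 0 := by
      rcases hfg with h | h <;> filter_upwards [h] with x hx <;> simp [hx]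
    simp [eLpNorm_congr_ae hzero]
  obtain ⟨hf₀, hg₀⟩ := not_or.1 hfg
  have hW₀ : weakLpNorm μ p f ≠ 0 := fun h => hf₀ (ae_eq_zero_of_weakLpNorm_eq_zero hp h)
  have hA₀ : eLpNorm g a μ ≠ 0 := fun h => hg₀ ((eLpNorm_eq_zero_iff hg ha₀.ne').1 h)
  have hB₀ : eLpNorm g b μ ≠ 0 := fun h => hg₀ ((eLpNorm_eq_zero_iff hg hb₀.ne').1 h)
  have hK : 0 < 1 + (p / (p - q)) ^ (1 / (q : ℝ)) := by positivity
  by_cases hfin : weakLpNorm μ p f ≠ ∞ ∧ eLpNorm g a μ ≠ ∞ ∧ eLpNorm g b μ ≠ ∞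
  · obtain ⟨hW, hA, hB⟩ := hfin
    refine le_mul_rpow_of_forall_le_add (by positivity) hθ.ne' hA₀ hA hB₀ hB hW₀ hW fun l hl => ?_
    rw [inv_div]
    exact eLpNorm_norm_mul_norm_le_add_weakLpNorm ha hqp hl hf hg
  · refine le_top.trans_eq (Eq.symm ?_)
    simp only [ENNReal.mul_eq_top, ENNReal.rpow_eq_top_iff, ENNReal.rpow_eq_zero_iff, mul_eq_zero,
      ne_eq, ENNReal.ofReal_eq_zero, ENNReal.ofReal_ne_top]
    grind

end WeakLp

section Hessian

open scoped NNReal RealInnerProductSpace Laplacian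

variable {ι E F : Type*} [NormedAddCommGroup E] [NormedAddCommGroup F]

section NormedSpace

variable [NormedSpace ℝ E] [NormedSpace ℝ F] {f : E → F}

lemma contDiff_fderiv_apply {m n : WithTop ℕ∞} (hf : ContDiff ℝ n f) (hmn : m + 1 ≤ n) (v : E) :
    ContDiff ℝ m (fun x => fderiv ℝ f x v) :=
  (hf.fderiv_right hmn).clm_apply contDiff_const

lemma fderiv_fderiv_apply (hf : ContDiff ℝ 2 f) (v w x : E) :
    fderiv ℝ (fun y => fderiv ℝ f y v) x w = fderiv ℝ (fderiv ℝ f) x w v := by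
  have hd : DifferentiableAt ℝ (fderiv ℝ f) x :=
    (hf.fderiv_right (m := 1) (by norm_num)).differentiable one_ne_zero x
  rw [fderiv_clm_apply hd (by fun_prop)]
  simp

lemma fderiv_fderiv_apply_comm (hf : ContDiff ℝ 2 f) (v w x : E) :
    fderiv ℝ (fun y => fderiv ℝ f y v) x w = fderiv ℝ (fun y => fderiv ℝ f y w) x v := by
  rw [fderiv_fderiv_apply hf, fderiv_fderiv_apply hf]
  exact (hf.contDiffAt.isSymmSndFDerivAt (by simp)).eq w v

lemma memLp_fderiv_of_hasCompactSupport [MeasurableSpace E] [OpensMeasurableSpace E]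
    {μ : Measure E} [IsFiniteMeasureOnCompacts μ] (p : ℝ≥0∞) (hf : ContDiff ℝ 1 f)
    (hfc : HasCompactSupport f) : MemLp (fderiv ℝ f) p μ :=
  (hf.continuous_fderiv one_ne_zero).memLp_of_hasCompactSupport (hfc.fderiv ℝ)

end NormedSpace

section OrthonormalBasis

variable [InnerProductSpace ℝ E] [Fintype ι]

lemma opNorm_sq_le_sum_norm_sq_apply [NormedSpace ℝ F] (e : OrthonormalBasis ι ℝ E)
    (L : E →L[ℝ] F) : ‖L‖ ^ 2 ≤ ∑ j, ‖L (e j)‖ ^ 2 := by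
  have hS : 0 ≤ ∑ j, ‖L (e j)‖ ^ 2 := by positivity
  refine (Real.le_sqrt (norm_nonneg _) hS).1 (L.opNorm_le_bound (Real.sqrt_nonneg _) fun x => ?_)
  have hx : L x = ∑ j, ⟪e j, x⟫ • L (e j) := by
    conv_lhs => rw [← e.sum_repr' x]
    simp
  calc ‖L x‖ ≤ ∑ j, ‖L (e j)‖ * ‖⟪e j, x⟫‖ := by
        rw [hx]
        exact (norm_sum_le _ _).trans_eq (by simp_rw [norm_smul, mul_comm])
    _ ≤ √((∑ j, ‖L (e j)‖ ^ 2) * ∑ j, ‖⟪e j, x⟫‖ ^ 2) :=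
        Real.le_sqrt_of_sq_le (Finset.sum_mul_sq_le_sq_mul_sq _ _ _)
    _ = √(∑ j, ‖L (e j)‖ ^ 2) * ‖x‖ := by
        rw [e.sum_sq_norm_inner_right, Real.sqrt_mul hS, Real.sqrt_sq (norm_nonneg _)]

variable {f : E → F}

lemma opNorm_fderiv_fderiv_sq_le [NormedSpace ℝ F] (e : OrthonormalBasis ι ℝ E)
    (hf : ContDiff ℝ 2 f) (x : E) :
    ‖fderiv ℝ (fderiv ℝ f) x‖ ^ 2 ≤
      ∑ j, ∑ k, ‖fderiv ℝ (fun y => fderiv ℝ f y (e j)) x (e k)‖ ^ 2 := by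
  rw [Finset.sum_comm]
  simp_rw [fderiv_fderiv_apply hf]
  exact (opNorm_sq_le_sum_norm_sq_apply e _).trans
    (Finset.sum_le_sum fun k _ => opNorm_sq_le_sum_norm_sq_apply e _)

variable [FiniteDimensional ℝ E]

lemma laplacian_eq_sum_fderiv_fderiv [NormedSpace ℝ F] (e : OrthonormalBasis ι ℝ E)
    (hf : ContDiff ℝ 2 f) (x : E) :
    Δ f x = ∑ j, fderiv ℝ (fun y => fderiv ℝ f y (e j)) x (e j) := by
  simp [InnerProductSpace.laplacian_eq_iteratedFDeriv_orthonormalBasis f e,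
    iteratedFDeriv_two_apply, fderiv_fderiv_apply hf]

end OrthonormalBasis

section Laplacian

variable [InnerProductSpace ℝ E] [FiniteDimensional ℝ E] [NormedSpace ℝ F] {f : E → F}

lemma continuous_laplacian (hf : ContDiff ℝ 2 f) : Continuous (Δ f) := by
  rw [funext (laplacian_eq_sum_fderiv_fderiv (stdOrthonormalBasis ℝ E) hf)]
  exact continuous_finsetSum _ fun j _ =>
    (contDiff_fderiv_apply (m := 0) (contDiff_fderiv_apply (m := 1) hf (by norm_num) _)
      (by norm_num) _).continuous

lemma hasCompactSupport_laplacian (hfc : HasCompactSupport f) : HasCompactSupport (Δ f) :=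
  (hfc.iteratedFDeriv (𝕜 := ℝ) 2).mono fun x hx hzero => hx <| by
    simp [InnerProductSpace.laplacian_eq_iteratedFDeriv_stdOrthonormalBasis, hzero]

end Laplacian

lemma eLpNorm_two_le_of_integral_norm_sq_le {X : Type*} [MeasurableSpace X] {μ : Measure X}
    {f : X → E} {g : X → F} (hf : MemLp f 2 μ) (hg : MemLp g 2 μ)
    (hfg : ∫ x, ‖f x‖ ^ 2 ∂μ ≤ ∫ x, ‖g x‖ ^ 2 ∂μ) : eLpNorm f 2 μ ≤ eLpNorm g 2 μ := by
  rw [hf.eLpNorm_eq_integral_rpow_norm two_ne_zero ofNat_ne_top,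
    hg.eLpNorm_eq_integral_rpow_norm two_ne_zero ofNat_ne_top]
  simp only [toReal_ofNat, Real.rpow_ofNat]
  gcongr

section Integral

variable [MeasurableSpace E] [BorelSpace E] [InnerProductSpace ℝ F] {f g : E → F}

lemma integrable_inner_of_hasCompactSupport [SecondCountableTopology E]
    {μ : Measure E} [IsFiniteMeasureOnCompacts μ]
    (hf : Continuous f) (hg : Continuous g) (hfc : HasCompactSupport f) :
    Integrable (fun x => ⟪f x, g x⟫) μ :=
  (hf.inner hg).integrable_of_hasCompactSupport <| hfc.mono fun x hx hfx => hx (by simp [hfx])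

variable (μ : Measure E) [μ.IsAddHaarMeasure]

section FiniteDimensional

variable [NormedSpace ℝ E] [FiniteDimensional ℝ E]

lemma integral_inner_fderiv_eq_neg
    (hf : ContDiff ℝ 1 f) (hg : ContDiff ℝ 1 g) (hfc : HasCompactSupport f) (v : E) :
    ∫ x, ⟪f x, fderiv ℝ g x v⟫ ∂μ = -∫ x, ⟪fderiv ℝ f x v, g x⟫ ∂μ :=
  integral_bilinear_fderiv_right_eq_neg_left_of_integrable (B := innerSL ℝ)
    (integrable_inner_of_hasCompactSupport
      (contDiff_fderiv_apply (m := 0) hf (by norm_num) v).continuous hg.continuous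
      (hfc.fderiv_apply (𝕜 := ℝ) v))
    (integrable_inner_of_hasCompactSupport hf.continuous
      (contDiff_fderiv_apply (m := 0) hg (by norm_num) v).continuous hfc)
    (integrable_inner_of_hasCompactSupport hf.continuous hg.continuous hfc)
    (fun x _ => hf.differentiable one_ne_zero x) (fun x _ => hg.differentiable one_ne_zero x)

lemma integrable_inner_fderiv_fderiv
    (hf : ContDiff ℝ 2 f) (hfc : HasCompactSupport f) (v w v' w' : E) :
    Integrable (fun x => ⟪fderiv ℝ (fun y => fderiv ℝ f y v) x w,
      fderiv ℝ (fun y => fderiv ℝ f y v') x w'⟫) μ := by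
  have hcont (v w : E) : Continuous fun x => fderiv ℝ (fun y => fderiv ℝ f y v) x w :=
    (contDiff_fderiv_apply (m := 0) (contDiff_fderiv_apply (m := 1) hf (by norm_num) v)
      (by norm_num) w).continuous
  exact integrable_inner_of_hasCompactSupport (hcont v w) (hcont v' w')
    ((hfc.fderiv_apply (𝕜 := ℝ) v).fderiv_apply (𝕜 := ℝ) w)

lemma integrable_norm_sq_fderiv_fderiv
    (hf : ContDiff ℝ 2 f) (hfc : HasCompactSupport f) (v w : E) :
    Integrable (fun x => ‖fderiv ℝ (fun y => fderiv ℝ f y v) x w‖ ^ 2) μ := by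
  simpa only [real_inner_self_eq_norm_sq] using integrable_inner_fderiv_fderiv μ hf hfc v w v w

lemma integral_norm_sq_fderiv_fderiv_eq_inner
    (hf : ContDiff ℝ 3 f) (hfc : HasCompactSupport f) (v w : E) :
    ∫ x, ‖fderiv ℝ (fun y => fderiv ℝ f y v) x w‖ ^ 2 ∂μ =
      ∫ x, ⟪fderiv ℝ (fun y => fderiv ℝ f y v) x v, fderiv ℝ (fun y => fderiv ℝ f y w) x w⟫ ∂μ := by
  have hD (z : E) : ContDiff ℝ 2 (fun y => fderiv ℝ f y z) :=
    contDiff_fderiv_apply hf (by norm_num) z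
  have hDD (z : E) : ContDiff ℝ 1 (fun x => fderiv ℝ (fun y => fderiv ℝ f y z) x w) :=
    contDiff_fderiv_apply (hD z) (by norm_num) w
  have hcomm (x : E) : fderiv ℝ (fun y => fderiv ℝ (fun z => fderiv ℝ f z v) y w) x w =
      fderiv ℝ (fun y => fderiv ℝ (fun z => fderiv ℝ f z w) y w) x v := by
    simp_rw [fderiv_fderiv_apply_comm (hf.of_le (by norm_num)) v w]
    exact fderiv_fderiv_apply_comm (hD w) v w x
  have hpure := integral_inner_fderiv_eq_neg μ ((hD v).of_le one_le_two) (hDD w)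
    (hfc.fderiv_apply (𝕜 := ℝ) v) v
  have hmixed := integral_inner_fderiv_eq_neg μ ((hD v).of_le one_le_two) (hDD v)
    (hfc.fderiv_apply (𝕜 := ℝ) v) w
  simp_rw [← real_inner_self_eq_norm_sq]
  rw [← neg_inj, ← hmixed, ← hpure]
  simp_rw [hcomm]

end FiniteDimensional

variable [InnerProductSpace ℝ E] [FiniteDimensional ℝ E]

lemma integral_sum_norm_sq_fderiv_fderiv [Fintype ι] (e : OrthonormalBasis ι ℝ E)
    (hf : ContDiff ℝ 3 f) (hfc : HasCompactSupport f) :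
    ∫ x, ∑ j, ∑ k, ‖fderiv ℝ (fun y => fderiv ℝ f y (e j)) x (e k)‖ ^ 2 ∂μ =
      ∫ x, ‖Δ f x‖ ^ 2 ∂μ := by
  have hf₂ : ContDiff ℝ 2 f := hf.of_le (by norm_num)
  have hint_sq (j k : ι) := integrable_norm_sq_fderiv_fderiv μ hf₂ hfc (e j) (e k)
  have hint_inner (j k : ι) := integrable_inner_fderiv_fderiv μ hf₂ hfc (e j) (e j) (e k) (e k)
  simp_rw [← real_inner_self_eq_norm_sq (Δ f _),
    laplacian_eq_sum_fderiv_fderiv e hf₂, sum_inner, inner_sum]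
  rw [integral_finsetSum _ fun j _ => integrable_finsetSum _ fun k _ => hint_sq j k,
    integral_finsetSum _ fun j _ => integrable_finsetSum _ fun k _ => hint_inner j k]
  refine Finset.sum_congr rfl fun j _ => ?_
  rw [integral_finsetSum _ fun k _ => hint_sq j k, integral_finsetSum _ fun k _ => hint_inner j k]
  exact Finset.sum_congr rfl fun k _ =>
    integral_norm_sq_fderiv_fderiv_eq_inner μ hf hfc (e j) (e k)

theorem eLpNorm_fderiv_fderiv_le_laplacian (hf : ContDiff ℝ 3 f) (hfc : HasCompactSupport f) :
    eLpNorm (fderiv ℝ (fderiv ℝ f)) 2 μ ≤ eLpNorm (Δ f) 2 μ := by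
  have hf₂ : ContDiff ℝ 2 f := hf.of_le (by norm_num)
  let e := stdOrthonormalBasis ℝ E
  have hmem : MemLp (fderiv ℝ (fderiv ℝ f)) 2 μ :=
    memLp_fderiv_of_hasCompactSupport (f := fderiv ℝ f) 2 (hf.fderiv_right (by norm_num))
      (hfc.fderiv ℝ)
  refine eLpNorm_two_le_of_integral_norm_sq_le (E := E →L[ℝ] E →L[ℝ] F) hmem
    ((continuous_laplacian hf₂).memLp_of_hasCompactSupport (hasCompactSupport_laplacian hfc)) ?_
  rw [← integral_sum_norm_sq_fderiv_fderiv μ e hf hfc]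
  exact integral_mono_of_nonneg (.of_forall fun x => by positivity)
    (integrable_finsetSum _ fun j _ => integrable_finsetSum _ fun k _ =>
      integrable_norm_sq_fderiv_fderiv μ hf₂ hfc (e j) (e k))
    (.of_forall (opNorm_fderiv_fderiv_sq_le e hf₂))

variable [FiniteDimensional ℝ F]

theorem exists_eLpNorm_fderiv_le_laplacian (hn : 0 < Module.finrank ℝ E) {p : ℝ≥0}
    (hp : (Module.finrank ℝ E : ℝ≥0)⁻¹ + p⁻¹ = 2⁻¹) :
    ∃ C : ℝ≥0, ∀ f : E → F, ContDiff ℝ 3 f → HasCompactSupport f →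
      eLpNorm (fderiv ℝ f) p μ ≤ C * eLpNorm (Δ f) 2 μ := by
  have hp' : (p : ℝ)⁻¹ = 2⁻¹ - (Module.finrank ℝ E : ℝ)⁻¹ := by
    have := congrArg NNReal.toReal hp
    push_cast at this
    linarith
  refine ⟨SNormLESNormFDerivOfEqConst (E →L[ℝ] F) μ 2, fun f hf hfc => ?_⟩
  grw [← eLpNorm_fderiv_fderiv_le_laplacian μ hf hfc]
  exact eLpNorm_le_eLpNorm_fderiv_of_eq (p := 2) μ (hf.fderiv_right (by norm_num))
    (hfc.fderiv ℝ) one_le_two hn hp'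

theorem exists_eLpNorm_fderiv_apply_le (hn : 2 < Module.finrank ℝ E) {r : ℝ}
    (hr : Module.finrank ℝ E < r) :
    ∃ C : ℝ≥0, ∀ (u : E → E) (v : E → F), AEStronglyMeasurable u μ → ContDiff ℝ 3 v →
      HasCompactSupport v →
      eLpNorm (fun x => fderiv ℝ v x (u x)) 2 μ ≤
        C * weakLpNorm μ r u * eLpNorm (fderiv ℝ v) 2 μ ^ (1 - Module.finrank ℝ E / r) *
          eLpNorm (Δ v) 2 μ ^ (Module.finrank ℝ E / r) := by
  set n := Module.finrank ℝ E
  obtain ⟨p, hp⟩ : ∃ p : ℝ≥0, (n : ℝ≥0)⁻¹ + p⁻¹ = 2⁻¹ := by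
    refine ⟨(2⁻¹ - (n : ℝ≥0)⁻¹)⁻¹, ?_⟩
    rw [inv_inv, add_tsub_cancel_of_le]
    gcongr
    exact_mod_cast hn.le
  have hp₀ : p ≠ 0 := by
    rintro rfl
    have : (n : ℝ≥0) = 2 := by simpa using hp
    exact hn.ne' (by exact_mod_cast this)
  have : HolderTriple ((n : ℝ≥0) : ℝ≥0∞) p 2 := ⟨by
    rw [← ENNReal.coe_inv (by positivity), ← ENNReal.coe_inv hp₀, ← ENNReal.coe_add, hp]
    simp⟩
  obtain ⟨C, hC⟩ := exists_eLpNorm_fderiv_le_laplacian (F := F) μ (by omega) hp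
  have hθ : 0 ≤ n / r := div_nonneg n.cast_nonneg (n.cast_nonneg.trans hr.le)
  refine ⟨Real.toNNReal (1 + (r / (r - n)) ^ (1 / (n : ℝ))) * C ^ (n / r),
    fun u v hu hv hvc => ?_⟩
  calc eLpNorm (fun x => fderiv ℝ v x (u x)) 2 μ
      ≤ eLpNorm (fun x => ‖u x‖ * ‖fderiv ℝ v x‖) 2 μ :=
        eLpNorm_mono_real fun x => by simpa only [mul_comm] using (fderiv ℝ v x).le_opNorm (u x)
    _ ≤ ENNReal.ofReal (1 + (r / (r - n)) ^ (1 / (n : ℝ))) * weakLpNorm μ r u *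
          eLpNorm (fderiv ℝ v) 2 μ ^ (1 - n / r) * eLpNorm (fderiv ℝ v) p μ ^ (n / r) :=
        eLpNorm_norm_mul_norm_le_weakLpNorm (q := n) one_le_two hr hu
          (hv.continuous_fderiv (by norm_num)).aestronglyMeasurable
    _ ≤ ENNReal.ofReal (1 + (r / (r - n)) ^ (1 / (n : ℝ))) * weakLpNorm μ r u *
          eLpNorm (fderiv ℝ v) 2 μ ^ (1 - n / r) * (C * eLpNorm (Δ v) 2 μ) ^ (n / r) := by
        gcongr
        exact hC v hv hvc
    _ = _ := by
        rw [ENNReal.mul_rpow_of_nonneg _ _ hθ, ENNReal.coe_mul, ENNReal.coe_rpow_of_nonneg _ hθ]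
        simp only [ENNReal.ofReal]
        ring

end Integral

end Hessian

section Coordinates

open scoped NNReal Laplacian

lemma eLpNorm_two_eq_lintegral_ofReal_norm_sq {X E : Type*} [MeasurableSpace X] {μ : Measure X}
    [NormedAddCommGroup E] (f : X → E) :
    eLpNorm f 2 μ = (∫⁻ x, ENNReal.ofReal (‖f x‖ ^ 2) ∂μ) ^ ((1 : ℝ) / 2) := by
  simp [eLpNorm_eq_lintegral_rpow_enorm_toReal two_ne_zero ofNat_ne_top,
    ENNReal.ofReal_pow, ofReal_norm]

variable {ι κ : Type*} [Fintype ι] [DecidableEq ι] [Fintype κ]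
  {v : EuclideanSpace ℝ ι → EuclideanSpace ℝ κ}

lemma norm_sq_fderiv_le_sum_sq (x : EuclideanSpace ℝ ι) :
    ‖fderiv ℝ v x‖ ^ 2 ≤ ∑ i, ∑ j, (fderiv ℝ v x (EuclideanSpace.single j 1) i) ^ 2 := by
  rw [Finset.sum_comm]
  simpa [EuclideanSpace.real_norm_sq_eq] using
    opNorm_sq_le_sum_norm_sq_apply (EuclideanSpace.basisFun ι ℝ) (fderiv ℝ v x)

lemma laplacian_apply_eq_sum_fderiv_fderiv (hv : ContDiff ℝ 2 v) (x : EuclideanSpace ℝ ι) (i : κ) :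
    Δ v x i = ∑ j, fderiv ℝ (fun y => fderiv ℝ v y (EuclideanSpace.single j 1) i) x
      (EuclideanSpace.single j 1) := by
  have hcoord (w : EuclideanSpace ℝ ι) : fderiv ℝ (fun y => fderiv ℝ v y w i) x w =
      fderiv ℝ (fun y => fderiv ℝ v y w) x w i := by
    have hd := (contDiff_fderiv_apply (m := 1) hv (by norm_num) w).differentiable one_ne_zero x
    exact DFunLike.congr_fun
      ((EuclideanSpace.proj (𝕜 := ℝ) i).hasFDerivAt.comp x hd.hasFDerivAt).fderiv w
  simp [laplacian_eq_sum_fderiv_fderiv (EuclideanSpace.basisFun ι ℝ) hv, hcoord]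

end Coordinates

theorem convection_term_weak_estimate_general {ι κ : Type*} [Fintype ι] [DecidableEq ι] [Fintype κ]
    (r s : ℝ) (hι : 2 < Fintype.card ι) (hr : Fintype.card ι < r)
    (hrs : Fintype.card ι / r + 2 / s = 1) :
    ∃ C : ℝ, 0 < C ∧
      ∀ (u : EuclideanSpace ℝ ι → EuclideanSpace ℝ ι) (v : EuclideanSpace ℝ ι → EuclideanSpace ℝ κ),
        AEStronglyMeasurable u volume → ContDiff ℝ 3 v → HasCompactSupport v →
        eLpNorm (fun x => fderiv ℝ v x (u x)) 2 volume
          ≤ ENNReal.ofReal C * weakLpNorm volume r u *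
              ((∫⁻ x, ENNReal.ofReal (∑ i, ∑ j,
                  (fderiv ℝ v x (EuclideanSpace.single j 1) i) ^ 2)) ^ ((1 : ℝ) / 2))
                ^ (2 / s) *
              ((∫⁻ x, ENNReal.ofReal (∑ i,
                  (∑ j, fderiv ℝ (fun y => fderiv ℝ v y (EuclideanSpace.single j 1) i)
                    x (EuclideanSpace.single j 1)) ^ 2)) ^ ((1 : ℝ) / 2))
                ^ ((s - 2) / s) := by
  have hr₀ : 0 < r := (Nat.cast_nonneg _).trans_lt hr
  have hθ : (Fintype.card ι : ℝ) / r < 1 := (div_lt_one hr₀).2 hr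
  have hs : s ≠ 0 := by
    rintro rfl
    simp [hθ.ne] at hrs
  have hθs : 1 - (Fintype.card ι : ℝ) / r = 2 / s := by linarith
  have hθs' : (Fintype.card ι : ℝ) / r = (s - 2) / s := by
    rw [sub_div, div_self hs]
    linarith
  have h_two_div : 0 ≤ 2 / s := by linarith
  rw [← finrank_euclideanSpace (𝕜 := ℝ)] at hι hr hθs hθs'
  obtain ⟨C, hC⟩ := exists_eLpNorm_fderiv_apply_le (F := EuclideanSpace ℝ κ) volume hι hr
  refine ⟨C + 1, by positivity, fun u v hu hv hvc => (hC u v hu hv hvc).trans ?_⟩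
  rw [hθs, hθs', eLpNorm_two_eq_lintegral_ofReal_norm_sq, eLpNorm_two_eq_lintegral_ofReal_norm_sq]
  simp_rw [EuclideanSpace.real_norm_sq_eq,
    laplacian_apply_eq_sum_fderiv_fderiv (hv.of_le (by norm_num))]
  gcongr
  · rw [← ENNReal.ofReal_coe_nnreal]
    gcongr
    simp
  · exact norm_sq_fderiv_le_sum_sq _

/-- **Lemma of Bosia–Pata–Robinson type.** Let `(r,s)` be a Prodi–Serrin pair with
`3 < r < ∞`, i.e. `2 < s < ∞` and `3/r + 2/s = 1`. There is a constant `C_r > 0` such that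
for every smooth compactly supported divergence-free vector field `u : ℝ³ → ℝ³`,
`‖(u·∇)u‖_{L²} ≤ C_r ‖u‖_{L^{r,∞}} ‖∇u‖_{L²}^{2/s} ‖Δu‖_{L²}^{(s-2)/s}`,
where `(u·∇)u` has `i`-th component `∑_j u_j ∂u_i/∂x_j` (i.e. `(u·∇)u (x) = Du(x) (u x)`),
`‖∇u‖_{L²}` is the `L²` norm of the pointwise Frobenius norm of the Jacobian and
`‖Δu‖_{L²}` is the `L²` norm of the pointwise Euclidean norm of the componentwise
Laplacian. -/
theorem convection_term_weak_estimate
    (r s : ℝ) (hr : 3 < r) (hs : 2 < s) (hrs : 3 / r + 2 / s = 1) :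
    ∃ C : ℝ, 0 < C ∧
      ∀ u : EuclideanSpace ℝ (Fin 3) → EuclideanSpace ℝ (Fin 3),
        ContDiff ℝ (⊤ : ℕ∞) u → HasCompactSupport u →
        (∀ x, ∑ j : Fin 3, fderiv ℝ u x (EuclideanSpace.single j 1) j = 0) →
        eLpNorm (fun x => fderiv ℝ u x (u x)) 2 volume
          ≤ ENNReal.ofReal C * weakLpNorm volume r u *
              ((∫⁻ x, ENNReal.ofReal (∑ i : Fin 3, ∑ j : Fin 3,
                  (fderiv ℝ u x (EuclideanSpace.single j 1) i) ^ 2)) ^ ((1 : ℝ) / 2))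
                ^ (2 / s) *
              ((∫⁻ x, ENNReal.ofReal (∑ i : Fin 3,
                  (∑ j : Fin 3, fderiv ℝ (fun y => fderiv ℝ u y (EuclideanSpace.single j 1) i)
                    x (EuclideanSpace.single j 1)) ^ 2)) ^ ((1 : ℝ) / 2))
                ^ ((s - 2) / s) := by
  obtain ⟨C, hC, h⟩ := convection_term_weak_estimate_general (ι := Fin 3) (κ := Fin 3) r s
    (by simp) (by simpa using hr) (by simpa using hrs)
  exact ⟨C, hC, fun u hu huc _ => h u u hu.continuous.aestronglyMeasurable
    (contDiff_infty.1 hu 3) huc⟩
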